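/- Under the construction hypotheses, for every 1 ≤ k ≤ ℓ it holds that {m_1, …, m_k} ⊆ wreach_{2r}[m*] with respect to (G, ≤), where m* denotes the ≤-greatest element of {m_1, …, m_k}. -/

import Mathlib

open SimpleGraph

variable {V : Type*}

/-- `u ∈ wreach G r v` iff `u` is weakly `r`-reachable from `v`:
there is a path of length at most `r` from `v` to `u` on which `u` is the `≤`-least vertex. -/
def wreach [LinearOrder V] (G : SimpleGraph V) (r : ℕ) (v : V) : Set V :=
  {u | ∃ p : G.Walk v u, p.IsPath ∧ p.length ≤ r ∧ ∀ w ∈ p.support, u ≤ w}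

/-- `S` r-separates `u` and `v` in `G`: every path of length at most `r`
from `u` to `v` contains a vertex of `S`. -/
def Separates (G : SimpleGraph V) (r : ℕ) (S : Set V) (u v : V) : Prop :=
  ∀ p : G.Walk u v, p.IsPath → p.length ≤ r → ∃ w ∈ p.support, w ∈ S

/-- `Sk G m π k = S^k`: the union of the vertex sets of the paths `π i j` for
`1 ≤ i ≤ j ≤ k`. -/
def Sk (G : SimpleGraph V) (m : ℕ → V) (π : ∀ i j : ℕ, G.Walk (m i) (m j)) (k : ℕ) :
    Set V :=
  {w | ∃ i j : ℕ, 1 ≤ i ∧ i ≤ j ∧ j ≤ k ∧ w ∈ (π i j).support}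

/-!
Since the sets `S^k` increase, the `r`-balls around `v` in `G_k` shrink, so their least vertices
`m_k` increase and `m* = m_k`. For `j ≤ k` both `m_j` and `m_k` lie in the `r`-ball around `v` in
`G_j`; the walk from `m_k` to `m_j` through `v` stays in this ball, of which `m_j` is the least
vertex.
-/

/-- The ball of radius `r` around `v` in the graph `G - S`. It is encoded through paths of `G`
that avoid `S`, rather than as a distance ball in an induced subgraph, so that the balls for
different `S` are sets of vertices of the same type. In particular it is empty when `v ∈ S`. -/
def avoidingBall (G : SimpleGraph V) (S : Set V) (r : ℕ) (v : V) : Set V :=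
  {w | ∃ p : G.Walk v w, p.IsPath ∧ p.length ≤ r ∧ ∀ x ∈ p.support, x ∉ S}

section AvoidingBall

variable {G : SimpleGraph V} {S T : Set V} {r : ℕ} {u v w : V}

theorem avoidingBall_anti (hST : S ⊆ T) : avoidingBall G T r v ⊆ avoidingBall G S r v :=
  fun _ ⟨p, hp, hlen, hT⟩ ↦ ⟨p, hp, hlen, fun x hx hxS ↦ hT x hx (hST hxS)⟩

theorem mem_avoidingBall_of_mem_support {p : G.Walk v u} (hlen : p.length ≤ r)
    (hS : ∀ x ∈ p.support, x ∉ S) (hw : w ∈ p.support) : w ∈ avoidingBall G S r v := by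
  classical
  let q := p.takeUntil w hw
  have hq : q.bypass.length ≤ r :=
    q.length_bypass_le_length.trans ((p.length_takeUntil_le_length hw).trans hlen)
  exact ⟨q.bypass, q.bypass_isPath, hq, fun x hx ↦
    hS x (p.support_takeUntil_subset_support hw (q.support_bypass_subset_support hx))⟩

variable [LinearOrder V]

theorem mem_wreach_of_walk (p : G.Walk v u) (hlen : p.length ≤ r)
    (hle : ∀ w ∈ p.support, u ≤ w) : u ∈ wreach G r v :=
  ⟨p.bypass, p.bypass_isPath, p.length_bypass_le_length.trans hlen,
    fun w hw ↦ hle w (p.support_bypass_subset_support hw)⟩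

theorem mem_wreach_of_isLeast_avoidingBall (hu : IsLeast (avoidingBall G S r v) u)
    (hw : w ∈ avoidingBall G S r v) : u ∈ wreach G (2 * r) w := by
  obtain ⟨⟨p, -, hp, hpS⟩, hmin⟩ := hu
  obtain ⟨q, -, hq, hqS⟩ := hw
  refine mem_wreach_of_walk (q.reverse.append p) ?_ fun x hx ↦ hmin ?_
  · rw [Walk.length_append, Walk.length_reverse]
    omega
  · rw [Walk.mem_support_append_iff, Walk.support_reverse, List.mem_reverse] at hx
    exact hx.elim (mem_avoidingBall_of_mem_support hq hqS)
      (mem_avoidingBall_of_mem_support hp hpS)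

end AvoidingBall

section IncreasingFamily

variable [LinearOrder V] {ι : Type*} [Preorder ι] {I : Set ι} {G : SimpleGraph V} {r : ℕ} {v : V}
  {S : ι → Set V} {m : ι → V}

theorem monotoneOn_of_isLeast_avoidingBall (hS : MonotoneOn S I)
    (hm : ∀ i ∈ I, IsLeast (avoidingBall G (S i) r v) (m i)) : MonotoneOn m I :=
  fun i hi j hj hij ↦ (hm j hj).mono (hm i hi) (avoidingBall_anti (hS hi hj hij))

theorem statement9_general (hS : MonotoneOn S I)
    (hm : ∀ i ∈ I, IsLeast (avoidingBall G (S i) r v) (m i)) {k : ι} (hk : IsGreatest I k)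
    {i : ι} (hi : i ∈ I) (hmax : ∀ j ∈ I, m j ≤ m i) : ∀ j ∈ I, m j ∈ wreach G (2 * r) (m i) := by
  intro j hj
  have hlast : m i = m k :=
    (monotoneOn_of_isLeast_avoidingBall hS hm hi hk.1 (hk.2 hi)).antisymm (hmax k hk.1)
  have hmk : m k ∈ avoidingBall G (S j) r v :=
    avoidingBall_anti (hS hj hk.1 (hk.2 hj)) (hm k hk.1).1
  rw [hlast]
  exact mem_wreach_of_isLeast_avoidingBall (hm j hj) hmk

end IncreasingFamily

theorem Sk_sub_one_monotone (G : SimpleGraph V) (m : ℕ → V)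
    (π : ∀ i j : ℕ, G.Walk (m i) (m j)) : Monotone fun k ↦ Sk G m π (k - 1) :=
  fun _ _ hkl _ ⟨i, j, hi, hij, hjk, hw⟩ ↦
    ⟨i, j, hi, hij, hjk.trans (Nat.sub_le_sub_right hkl 1), hw⟩

theorem statement9 [Fintype V] [LinearOrder V] (G : SimpleGraph V) (r : ℕ) (hr : 1 ≤ r)
    (v : V) (ℓ : ℕ) (m : ℕ → V) (π : ∀ i j : ℕ, G.Walk (m i) (m j))
    (hπ : ∀ i j : ℕ, 1 ≤ i → i ≤ j → j ≤ ℓ → (π i j).IsPath ∧ (π i j).length ≤ 2 * r)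
    (hv : ∀ k : ℕ, 1 ≤ k → k ≤ ℓ → v ∉ Sk G m π (k - 1))
    (hm : ∀ k : ℕ, 1 ≤ k → k ≤ ℓ →
      (∃ p : G.Walk v (m k), p.IsPath ∧ p.length ≤ r ∧
        ∀ w ∈ p.support, w ∉ Sk G m π (k - 1)) ∧
      (∀ w : V, (∃ p : G.Walk v w, p.IsPath ∧ p.length ≤ r ∧
        ∀ x ∈ p.support, x ∉ Sk G m π (k - 1)) → m k ≤ w))
    (hπk : ∀ i k : ℕ, 1 ≤ i → i ≤ k → k ≤ ℓ →
      ∀ w ∈ (π i k).support, w ∉ Sk G m π (i - 1))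
    (k : ℕ) (hk1 : 1 ≤ k) (hkℓ : k ≤ ℓ)
    -- `mstar` is the `≤`-greatest element of `{m 1, …, m k}`
    (mstar : V) (hmem : ∃ j : ℕ, 1 ≤ j ∧ j ≤ k ∧ mstar = m j)
    (hub : ∀ j : ℕ, 1 ≤ j → j ≤ k → m j ≤ mstar) :
    ∀ j : ℕ, 1 ≤ j → j ≤ k → m j ∈ wreach G (2 * r) mstar := by
  obtain ⟨i, hi, hik, rfl⟩ := hmem
  exact fun j hj hjk ↦ statement9_general ((Sk_sub_one_monotone G m π).monotoneOn (Set.Icc 1 k))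
    (fun a ha ↦ (hm a ha.1 (ha.2.trans hkℓ)).imp_right fun hmin w hw ↦ hmin w hw)
    (isGreatest_Icc hk1) ⟨hi, hik⟩ (fun a ha ↦ hub a ha.1 ha.2) j ⟨hj, hjk⟩
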